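/- In a nonlinear model (p_k ≠ k/m for some 0 ≤ k ≤ m) with X_0 > 0 and Y_0 > 0: if 0 ∈ Z_P and there exists ε > 0 with P > 0 on (0, ε), then P(lim_{n→∞} a_n = 0) = 0; and if 1 ∈ Z_P and there exists ε > 0 with P < 0 on (1−ε, 1), then P(lim_{n→∞} a_n = 1) = 0. -/

import Mathlib

open MeasureTheory ProbabilityTheory Filter Set

noncomputable section

/-- The polynomial `P(z) = (1/2) ∑_{k=0}^m C(m,k) z^k (1-z)^{m-k} (p_k - k/m)`. -/
def polyP (m : ℕ) (p : ℕ → ℝ) (z : ℝ) : ℝ :=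
  (1 / 2) * ∑ k ∈ Finset.range (m + 1),
    (m.choose k : ℝ) * z ^ k * (1 - z) ^ (m - k) * (p k - (k : ℝ) / m)

/-- The zero set `Z_P = {z ∈ [0,1] : P(z) = 0}`. -/
def zeroSetP (m : ℕ) (p : ℕ → ℝ) : Set ℝ :=
  {z ∈ Set.Icc (0 : ℝ) 1 | polyP m p z = 0}

/-- The two-type preferential attachment process with `m` edges per new node and type
adoption parameters `p 0, …, p m`, defined on a probability space `(Ω, μ)` with filtration
`F`.  `A n` is the number of red nodes and `X n` the sum of the degrees of red nodes at time
`n`; the transition probabilities given `F n` are those of the model: a number `k` of red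
neighbours is drawn from the `Binomial(m, x_n)` distribution, and then the new node is red
with probability `p k` (adding `1` to the red nodes and `k + m` to the red degrees) and blue
with probability `1 - p k` (adding `k` to the red degrees). -/
structure PAProcess (Ω : Type) [MeasurableSpace Ω] where
  μ : Measure Ω
  isProb : IsProbabilityMeasure μ
  m : ℕ
  hm : 1 ≤ m
  p : ℕ → ℝ
  hp : ∀ k ≤ m, p k ∈ Set.Icc (0 : ℝ) 1
  A : ℕ → Ω → ℕ
  X : ℕ → Ω → ℕ
  F : Filtration ℕ ‹MeasurableSpace Ω›
  A0 : ℕ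
  B0 : ℕ
  X0 : ℕ
  Y0 : ℕ
  hA0 : ∀ ω, A 0 ω = A0
  hX0 : ∀ ω, X 0 ω = X0
  adaptedA : ∀ n, Measurable[F n] (A n)
  adaptedX : ∀ n, Measurable[F n] (X n)
  hXle : ∀ n ω, X n ω ≤ X0 + Y0 + 2 * m * n
  step_red : ∀ n, ∀ k ≤ m,
    μ[Set.indicator {ω | A (n + 1) ω = A n ω + 1 ∧ X (n + 1) ω = X n ω + k + m}
        (fun _ => (1 : ℝ)) | F n]
      =ᵐ[μ] fun ω => (m.choose k : ℝ) *
        ((X n ω : ℝ) / ((X0 : ℝ) + Y0 + 2 * m * n)) ^ k *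
        (1 - (X n ω : ℝ) / ((X0 : ℝ) + Y0 + 2 * m * n)) ^ (m - k) * p k
  step_blue : ∀ n, ∀ k ≤ m,
    μ[Set.indicator {ω | A (n + 1) ω = A n ω ∧ X (n + 1) ω = X n ω + k}
        (fun _ => (1 : ℝ)) | F n]
      =ᵐ[μ] fun ω => (m.choose k : ℝ) *
        ((X n ω : ℝ) / ((X0 : ℝ) + Y0 + 2 * m * n)) ^ k *
        (1 - (X n ω : ℝ) / ((X0 : ℝ) + Y0 + 2 * m * n)) ^ (m - k) * (1 - p k)

namespace PAProcess

variable {Ω : Type} [MeasurableSpace Ω] (P : PAProcess Ω)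

/-- Total degree `S_n = S_0 + 2mn`. -/
def S (n : ℕ) : ℕ := P.X0 + P.Y0 + 2 * P.m * n

/-- Normalized red degree `x_n = X_n / S_n`. -/
def x (n : ℕ) (ω : Ω) : ℝ := (P.X n ω : ℝ) / (P.S n : ℝ)

/-- Normalized red node count `a_n = A_n / (A_0 + B_0 + n)`. -/
def a (n : ℕ) (ω : Ω) : ℝ := (P.A n ω : ℝ) / ((P.A0 : ℝ) + P.B0 + n)

/-- The polynomial `P` of the process. -/
def poly : ℝ → ℝ := polyP P.m P.p

/-- The zero set `Z_P` of the process. -/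
def Zp : Set ℝ := zeroSetP P.m P.p

end PAProcess

/-!
At a step from red degree `X` and total degree `S`, the red degree grows by some
`d ∈ [0, 2 * m]` with mean `2 * m * (X / S + P (X / S))`, and `S` grows by `2 * m`. By convexity,
`S / (X - 2 * m)` is therefore a nonnegative supermartingale as long as `P (X / S) ≥ 0`, hence it
cannot tend to infinity. Since `X → ∞` by the conditional Borel–Cantelli lemma, this rules out
`X / S → 0` whenever `P ≥ 0` to the right of `0`.

The node proportions reduce to the degree proportions. The red degree is, up to a constant, `m`
times the number of red nodes plus their in-degree; the in-degree over `S` is an average of the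
node proportions perturbed by a martingale bounded in `L²`, so `a → 0` forces `X / S → 0`.
The endpoint `1` follows by exchanging the colours, which turns `P` into `-P (1 - ·)`.
-/

open scoped Topology

section ConvexRecursion

variable {c : ℕ → ℝ}

lemma tendsto_prod_one_sub_zero (hc1 : ∀ n, c n ≤ 1)
    (hc : Tendsto (fun n => ∑ i ∈ Finset.range n, c i) atTop atTop) :
    Tendsto (fun n => ∏ i ∈ Finset.range n, (1 - c i)) atTop (𝓝 0) := by
  refine squeeze_zero (fun n => Finset.prod_nonneg fun i _ => sub_nonneg.2 (hc1 i)) (fun n => ?_)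
    (Real.tendsto_exp_neg_atTop_nhds_zero.comp hc)
  calc ∏ i ∈ Finset.range n, (1 - c i)
      ≤ ∏ i ∈ Finset.range n, Real.exp (-c i) :=
        Finset.prod_le_prod (fun i _ => sub_nonneg.2 (hc1 i))
          fun i _ => Real.one_sub_le_exp_neg (c i)
    _ = Real.exp (-∑ i ∈ Finset.range n, c i) := by
        rw [← Real.exp_sum, Finset.sum_neg_distrib]

lemma le_add_mul_prod_one_sub_of_le {u : ℕ → ℝ} {δ : ℝ} (hc1 : ∀ n, c n ≤ 1)
    (hu : ∀ n, u (n + 1) ≤ (1 - c n) * u n + c n * δ) (n : ℕ) :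
    u n ≤ δ + (u 0 - δ) * ∏ i ∈ Finset.range n, (1 - c i) := by
  induction n with
  | zero => simp
  | succ n ih =>
    rw [Finset.prod_range_succ]
    have := mul_le_mul_of_nonneg_left ih (sub_nonneg.2 (hc1 n))
    linarith [hu n]

lemma tendsto_of_convexComb_recursion {E : Type*} [NormedAddCommGroup E] [NormedSpace ℝ E]
    {w e : ℕ → E} {l : E} (hc0 : ∀ n, 0 ≤ c n) (hc1 : ∀ n, c n ≤ 1)
    (hc : Tendsto (fun n => ∑ i ∈ Finset.range n, c i) atTop atTop) (he : Tendsto e atTop (𝓝 l))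
    (hw : ∀ n, w (n + 1) = (1 - c n) • w n + c n • e n) : Tendsto w atTop (𝓝 l) := by
  refine Metric.tendsto_nhds.2 fun ε hε => ?_
  obtain ⟨N, hN⟩ := Metric.tendsto_atTop.1 he (ε / 2) (half_pos hε)
  have hstep (n : ℕ) : dist (w (n + 1 + N)) l ≤
      (1 - c (n + N)) * dist (w (n + N)) l + c (n + N) * (ε / 2) := by
    have hsplit : w (n + 1 + N) - l =
        (1 - c (n + N)) • (w (n + N) - l) + c (n + N) • (e (n + N) - l) := by
      rw [add_right_comm, hw]
      module
    calc dist (w (n + 1 + N)) l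
        ≤ (1 - c (n + N)) * dist (w (n + N)) l + c (n + N) * dist (e (n + N)) l := by
          rw [dist_eq_norm, hsplit, dist_eq_norm, dist_eq_norm]
          refine (norm_add_le _ _).trans_eq ?_
          rw [norm_smul_of_nonneg (sub_nonneg.2 (hc1 _)), norm_smul_of_nonneg (hc0 _)]
      _ ≤ _ := by
          gcongr
          · exact hc0 _
          · exact (hN _ (Nat.le_add_left N n)).le
  have htail : Tendsto (fun n => ∑ i ∈ Finset.range n, c (i + N)) atTop atTop := by
    refine (tendsto_atTop_add_const_right _ (-∑ i ∈ Finset.range N, c i)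
      (hc.comp (tendsto_add_atTop_nat N))).congr fun n => ?_
    rw [Function.comp_apply, add_comm n N, Finset.sum_range_add]
    simp only [add_comm N, add_neg_cancel_comm]
  have hlim : Tendsto (fun n => ε / 2 + (dist (w (0 + N)) l - ε / 2) *
      ∏ i ∈ Finset.range n, (1 - c (i + N))) atTop (𝓝 (ε / 2)) := by
    simpa using ((tendsto_prod_one_sub_zero (fun n => hc1 (n + N)) htail).const_mul
      (dist (w (0 + N)) l - ε / 2)).const_add (ε / 2)
  rw [← map_add_atTop_eq_nat N, eventually_map]
  filter_upwards [hlim.eventually_lt_const (half_lt_self hε)] with n hn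
  exact (le_add_mul_prod_one_sub_of_le (u := fun n => dist (w (n + N)) l)
    (fun n => hc1 (n + N)) hstep n).trans_lt hn

end ConvexRecursion

section Probability

variable {Ω : Type*} {m m₀ : MeasurableSpace Ω} {μ : Measure Ω}

lemma ae_not_tendsto_atTop_of_eLpNorm_bdd {f : ℕ → Ω → ℝ} {R : NNReal} {p : ENNReal} (hp : p ≠ 0)
    (hf : ∀ n, Measurable (f n)) (hbdd : ∀ n, eLpNorm (f n) p μ ≤ R) :
    ∀ᵐ ω ∂μ, ¬ Tendsto (fun n => f n ω) atTop atTop := by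
  filter_upwards [ae_bdd_liminf_atTop_of_eLpNorm_bdd hp hf hbdd] with ω hω htop
  have henorm : Tendsto (fun n => ‖f n ω‖ₑ) atTop (𝓝 ⊤) := by
    simpa only [Function.comp_def, ofReal_norm] using
      ENNReal.tendsto_ofReal_atTop.comp (tendsto_norm_atTop_atTop.comp htop)
  exact hω.ne henorm.liminf_eq

section Martingale

variable [IsFiniteMeasure μ] {F : Filtration ℕ m₀} {f : ℕ → Ω → ℝ}

lemma integral_mul_sub_eq_zero_of_martingale (hf : Martingale f F μ)
    (hf2 : ∀ n, MemLp (f n) 2 μ) (n : ℕ) : ∫ ω, f n ω * (f (n + 1) ω - f n ω) ∂μ = 0 := by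
  have hincr : μ[f (n + 1) - f n | F n] =ᵐ[μ] 0 := by
    filter_upwards [condExp_sub (hf.integrable (n + 1)) (hf.integrable n) (F n),
      hf.condExp_ae_eq n.le_succ, hf.condExp_ae_eq (le_refl n)] with ω hsub hsucc hself
    simp [hsub, hsucc, hself]
  have hpull : μ[f n * (f (n + 1) - f n) | F n] =ᵐ[μ] 0 := by
    filter_upwards [hincr, condExp_mul_of_stronglyMeasurable_left (hf.stronglyMeasurable n)
      ((hf2 n).integrable_mul ((hf2 (n + 1)).sub (hf2 n)))
      ((hf.integrable (n + 1)).sub (hf.integrable n))] with ω hω hmul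
    simp [hmul, hω]
  calc ∫ ω, f n ω * (f (n + 1) ω - f n ω) ∂μ
      = ∫ ω, (μ[f n * (f (n + 1) - f n) | F n]) ω ∂μ := (integral_condExp (F.le n)).symm
    _ = 0 := by simp [integral_congr_ae hpull]

lemma integral_sq_succ_of_martingale (hf : Martingale f F μ) (hf2 : ∀ n, MemLp (f n) 2 μ)
    (n : ℕ) :
    ∫ ω, f (n + 1) ω ^ 2 ∂μ = ∫ ω, f n ω ^ 2 ∂μ + ∫ ω, (f (n + 1) ω - f n ω) ^ 2 ∂μ := by
  have hdiff : MemLp (fun ω => f (n + 1) ω - f n ω) 2 μ := (hf2 (n + 1)).sub (hf2 n)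
  have hcross : Integrable (fun ω => 2 * (f n ω * (f (n + 1) ω - f n ω))) μ :=
    ((hf2 n).integrable_mul hdiff).const_mul 2
  have hsum : Integrable (fun ω => f n ω ^ 2 + 2 * (f n ω * (f (n + 1) ω - f n ω))) μ :=
    (hf2 n).integrable_sq.add hcross
  have hexpand (ω : Ω) : f (n + 1) ω ^ 2 =
      f n ω ^ 2 + 2 * (f n ω * (f (n + 1) ω - f n ω)) + (f (n + 1) ω - f n ω) ^ 2 := by ring
  rw [integral_congr_ae (.of_forall hexpand),
    integral_add hsum hdiff.integrable_sq,
    integral_add (hf2 n).integrable_sq hcross, integral_const_mul,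
    integral_mul_sub_eq_zero_of_martingale hf hf2, mul_zero, add_zero]

lemma ae_exists_tendsto_of_martingale_of_summable (hf : Martingale f F μ)
    (hf2 : ∀ n, MemLp (f n) 2 μ)
    (hsum : Summable fun n => ∫ ω, (f (n + 1) ω - f n ω) ^ 2 ∂μ) :
    ∀ᵐ ω ∂μ, ∃ l, Tendsto (fun n => f n ω) atTop (𝓝 l) := by
  set C : ℝ := ∫ ω, f 0 ω ^ 2 ∂μ + ∑' n, ∫ ω, (f (n + 1) ω - f n ω) ^ 2 ∂μ
  have hpyth (n : ℕ) : ∫ ω, f n ω ^ 2 ∂μ = ∫ ω, f 0 ω ^ 2 ∂μ +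
      ∑ i ∈ Finset.range n, ∫ ω, (f (i + 1) ω - f i ω) ^ 2 ∂μ := by
    induction n with
    | zero => simp
    | succ n ih => rw [integral_sq_succ_of_martingale hf hf2, ih, Finset.sum_range_succ, add_assoc]
  have hsq (n : ℕ) : ∫ ω, f n ω ^ 2 ∂μ ≤ C := by
    rw [hpyth]
    exact add_le_add le_rfl
      (hsum.sum_le_tsum _ fun i _ => integral_nonneg fun ω => sq_nonneg _)
  have hL1 (n : ℕ) : ∫ ω, ‖f n ω‖ ∂μ ≤ μ.real univ + C := by
    calc ∫ ω, ‖f n ω‖ ∂μ ≤ ∫ ω, (1 + f n ω ^ 2) ∂μ := by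
          refine integral_mono (hf.integrable n).norm
            ((integrable_const 1).add (hf2 n).integrable_sq) fun ω => ?_
          simp only [Real.norm_eq_abs]
          nlinarith [sq_abs (f n ω), sq_nonneg (|f n ω| - 1), abs_nonneg (f n ω)]
      _ = μ.real univ + ∫ ω, f n ω ^ 2 ∂μ := by
          rw [integral_add (integrable_const 1) (hf2 n).integrable_sq]
          simp
      _ ≤ _ := add_le_add le_rfl (hsq n)
  refine hf.submartingale.exists_ae_tendsto_of_bdd (R := (μ.real univ + C).toNNReal) fun n => ?_
  rw [eLpNorm_one_eq_lintegral_enorm, ← ofReal_integral_norm_eq_lintegral_enorm (hf.integrable n)]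
  exact ENNReal.ofReal_le_ofReal (hL1 n)

end Martingale

section FinitePartition

variable {ι : Type*} {s : Finset ι} {E : ι → Set Ω}

lemma ae_exists_mem_of_sum_condExp_indicator_eq_one [IsProbabilityMeasure μ] (hm : m ≤ m₀)
    (hE : ∀ i ∈ s, MeasurableSet (E i)) (hdisj : (s : Set ι).PairwiseDisjoint E)
    (hsum : (fun ω => ∑ i ∈ s, (μ[(E i).indicator (fun _ => (1 : ℝ)) | m]) ω) =ᵐ[μ] 1) :
    ∀ᵐ ω ∂μ, ∃ i ∈ s, ω ∈ E i := by
  have hprob : μ.real (⋃ i ∈ s, E i) = 1 := by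
    calc μ.real (⋃ i ∈ s, E i) = ∑ i ∈ s, μ.real (E i) := measureReal_biUnion_finset hdisj hE
      _ = ∑ i ∈ s, ∫ ω, (μ[(E i).indicator (fun _ => (1 : ℝ)) | m]) ω ∂μ := by
          refine Finset.sum_congr rfl fun i hi => ?_
          rw [integral_condExp hm, integral_indicator_const _ (hE i hi), smul_eq_mul, mul_one]
      _ = ∫ ω, ∑ i ∈ s, (μ[(E i).indicator (fun _ => (1 : ℝ)) | m]) ω ∂μ :=
          (integral_finsetSum _ fun i _ => integrable_condExp).symm
      _ = 1 := by simp [integral_congr_ae hsum]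
  have hmem : ∀ᵐ ω ∂μ, ω ∈ ⋃ i ∈ s, E i := by
    refine (mem_ae_iff_prob_eq_one (s.measurableSet_biUnion hE)).2 ?_
    rwa [measureReal_def, ENNReal.toReal_eq_one_iff] at hprob
  simpa using hmem

lemma condExp_ae_eq_sum_of_eqOn [IsFiniteMeasure μ] {g : ι → Ω → ℝ} {Y : Ω → ℝ}
    (hE : ∀ i ∈ s, MeasurableSet (E i)) (hdisj : (s : Set ι).PairwiseDisjoint E)
    (hcover : ∀ᵐ ω ∂μ, ∃ i ∈ s, ω ∈ E i) (hg : ∀ i ∈ s, StronglyMeasurable[m] (g i))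
    (hint : ∀ i ∈ s, Integrable (g i) μ) (hY : ∀ i ∈ s, EqOn Y (g i) (E i)) :
    μ[Y | m] =ᵐ[μ] fun ω => ∑ i ∈ s, (μ[(E i).indicator (fun _ => (1 : ℝ)) | m]) ω * g i ω := by
  have hmul (i : ι) : (E i).indicator (g i) = g i * (E i).indicator fun _ => (1 : ℝ) := by
    ext ω
    by_cases hω : ω ∈ E i <;> simp [hω]
  have hsplit : Y =ᵐ[μ] ∑ i ∈ s, (E i).indicator (g i) := by
    filter_upwards [hcover] with ω hω
    calc Y ω = (⋃ i ∈ s, E i).indicator Y ω := (indicator_of_mem (by simpa using hω) Y).symm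
      _ = ∑ i ∈ s, (E i).indicator Y ω := congrFun (Finset.indicator_biUnion s E hdisj) ω
      _ = (∑ i ∈ s, (E i).indicator (g i)) ω := by
          rw [Finset.sum_apply]
          exact Finset.sum_congr rfl fun i hi => congrFun (indicator_congr (hY i hi)) ω
  have hpull : ∀ᵐ ω ∂μ, ∀ i ∈ s, (μ[(E i).indicator (g i) | m]) ω =
      (μ[(E i).indicator (fun _ => (1 : ℝ)) | m]) ω * g i ω := by
    refine (Finset.eventually_all s).2 fun i hi => ?_
    have hprod : Integrable (g i * (E i).indicator fun _ => (1 : ℝ)) μ :=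
      hmul i ▸ (hint i hi).indicator (hE i hi)
    filter_upwards [condExp_mul_of_stronglyMeasurable_left (hg i hi) hprod
      ((integrable_const 1).indicator (hE i hi))] with ω hω
    rw [hmul, hω, Pi.mul_apply, mul_comm]
  filter_upwards [condExp_congr_ae (m := m) hsplit, hpull,
    condExp_finsetSum (fun i hi => (hint i hi).indicator (hE i hi)) m] with ω hcongr hω hsum
  rw [hcongr, hsum, Finset.sum_apply]
  exact Finset.sum_congr rfl hω

end FinitePartition

end Probability

section StepLaw

variable {m : ℕ} {p : ℕ → ℝ} {z : ℝ}

/-- The possible outcomes `(k, b)` of one step of the process: `k ≤ m` of the chosen neighbours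
are red, and the new node is red if and only if `b` is true. -/
def outcomes (m : ℕ) : Finset (ℕ × Bool) := Finset.range (m + 1) ×ˢ Finset.univ

/-- The probability of an outcome of one step when the normalized red degree is `z`. -/
def outcomeProb (m : ℕ) (p : ℕ → ℝ) (z : ℝ) (i : ℕ × Bool) : ℝ :=
  m.choose i.1 * z ^ i.1 * (1 - z) ^ (m - i.1) * if i.2 then p i.1 else 1 - p i.1

/-- The expectation of `g` under the law `outcomeProb m p z` of one step. -/
def outcomeMean (m : ℕ) (p : ℕ → ℝ) (z : ℝ) (g : ℕ × Bool → ℝ) : ℝ :=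
  ∑ i ∈ outcomes m, outcomeProb m p z i * g i

/-- The increase of the red degree caused by an outcome. -/
def degreeGain (m : ℕ) (i : ℕ × Bool) : ℕ := i.1 + m * i.2.toNat

lemma mem_outcomes {i : ℕ × Bool} : i ∈ outcomes m ↔ i.1 ≤ m := by
  simp [outcomes]

lemma degreeGain_le {i : ℕ × Bool} (hi : i ∈ outcomes m) : degreeGain m i ≤ 2 * m := by
  have := mem_outcomes.1 hi
  have := Nat.mul_le_mul_left m i.2.toNat_le
  unfold degreeGain
  lia

lemma outcomeProb_nonneg (hp : ∀ k ≤ m, p k ∈ Icc (0 : ℝ) 1) (hz : z ∈ Icc (0 : ℝ) 1)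
    {i : ℕ × Bool} (hi : i ∈ outcomes m) : 0 ≤ outcomeProb m p z i := by
  obtain ⟨hp0, hp1⟩ := hp i.1 (mem_outcomes.1 hi)
  have hz0 := hz.1
  have hz1 := sub_nonneg.2 hz.2
  refine mul_nonneg (by positivity) ?_
  split_ifs
  exacts [hp0, sub_nonneg.2 hp1]

lemma outcomeMean_mono (hp : ∀ k ≤ m, p k ∈ Icc (0 : ℝ) 1) (hz : z ∈ Icc (0 : ℝ) 1)
    {g h : ℕ × Bool → ℝ} (hgh : ∀ i ∈ outcomes m, g i ≤ h i) :
    outcomeMean m p z g ≤ outcomeMean m p z h :=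
  Finset.sum_le_sum fun i hi => mul_le_mul_of_nonneg_left (hgh i hi) (outcomeProb_nonneg hp hz hi)

lemma outcomeMean_eq_sum_range (g : ℕ × Bool → ℝ) :
    outcomeMean m p z g = ∑ k ∈ Finset.range (m + 1), (m.choose k : ℝ) * z ^ k * (1 - z) ^ (m - k) *
      (p k * g (k, true) + (1 - p k) * g (k, false)) := by
  rw [outcomeMean, outcomes, Finset.sum_product]
  refine Finset.sum_congr rfl fun k _ => ?_
  simp only [outcomeProb, Fintype.sum_bool, if_true, Bool.false_eq_true, if_false]
  ring

lemma sum_outcomeProb : ∑ i ∈ outcomes m, outcomeProb m p z i = 1 := by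
  calc ∑ i ∈ outcomes m, outcomeProb m p z i = outcomeMean m p z fun _ => 1 := by
        simp only [outcomeMean, mul_one]
    _ = ∑ k ∈ Finset.range (m + 1), (bernsteinPolynomial ℝ m k).eval z := by
        simp [outcomeMean_eq_sum_range, bernsteinPolynomial]
    _ = 1 := by rw [← Polynomial.eval_finsetSum, bernsteinPolynomial.sum, Polynomial.eval_one]

lemma outcomeMean_fst : outcomeMean m p z (fun i => i.1) = m * z := by
  calc outcomeMean m p z (fun i => i.1)
      = ∑ k ∈ Finset.range (m + 1), (k • bernsteinPolynomial ℝ m k).eval z := by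
        rw [outcomeMean_eq_sum_range]
        refine Finset.sum_congr rfl fun k _ => ?_
        simp only [bernsteinPolynomial, nsmul_eq_mul, Polynomial.eval_mul, Polynomial.eval_natCast,
          Polynomial.eval_pow, Polynomial.eval_X, Polynomial.eval_sub, Polynomial.eval_one]
        ring
    _ = m * z := by rw [← Polynomial.eval_finsetSum, bernsteinPolynomial.sum_smul]; simp

lemma outcomeMean_add_mul (g : ℕ × Bool → ℝ) (b c : ℝ) :
    outcomeMean m p z (fun i => b + c * g i) = b + c * outcomeMean m p z g := by
  simp only [outcomeMean, mul_add, Finset.sum_add_distrib, ← Finset.sum_mul, sum_outcomeProb,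
    one_mul, mul_left_comm _ c, ← Finset.mul_sum]

lemma outcomeMean_degreeGain :
    outcomeMean m p z (fun i => degreeGain m i) = 2 * m * (z + polyP m p z) := by
  have hred : outcomeMean m p z (fun i => degreeGain m i - 2 * i.1) = 2 * m * polyP m p z := by
    rw [outcomeMean_eq_sum_range, polyP, ← mul_assoc, Finset.mul_sum]
    refine Finset.sum_congr rfl fun k hk => ?_
    have hdiv : (m : ℝ) * (k / m) = k := by
      refine mul_div_cancel_of_imp' fun h => ?_
      simp_all
    simp only [degreeGain, Bool.toNat_true, Bool.toNat_false]
    push_cast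
    linear_combination (m.choose k * z ^ k * (1 - z) ^ (m - k)) * hdiv
  have hsplit : outcomeMean m p z (fun i => degreeGain m i) =
      outcomeMean m p z (fun i => degreeGain m i - 2 * i.1) +
        2 * outcomeMean m p z (fun i => i.1) := by
    simp only [outcomeMean, Finset.mul_sum, ← Finset.sum_add_distrib]
    exact Finset.sum_congr rfl fun i _ => by ring
  rw [hsplit, hred, outcomeMean_fst]
  ring

-- With the red degree shifted to `y + 2 * m`, the chord bound on the convex `d ↦ 1 / (y + d)` over
-- `[0, 2 * m]` costs nothing, so that `0 ≤ P` suffices without a second-order margin.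
lemma outcomeMean_total_div_le {y S : ℝ} (hp : ∀ k ≤ m, p k ∈ Icc (0 : ℝ) 1) (hy : 0 < y)
    (hyS : y + 2 * m ≤ S) (hP : 0 ≤ polyP m p ((y + 2 * m) / S)) :
    outcomeMean m p ((y + 2 * m) / S) (fun i => (S + 2 * m) / (y + degreeGain m i)) ≤ S / y := by
  have hy2 : 0 < y + 2 * m := by positivity
  have hS : 0 < S := hy2.trans_le hyS
  have hchord : ∀ i ∈ outcomes m, (S + 2 * m) / (y + degreeGain m i) ≤
      (S + 2 * m) / y + -((S + 2 * m) / (y * (y + 2 * m))) * degreeGain m i := by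
    intro i hi
    have hd : (degreeGain m i : ℝ) ≤ 2 * m := mod_cast degreeGain_le hi
    have hgap : 0 ≤ (S + 2 * m) * (degreeGain m i * (2 * m - degreeGain m i)) /
        (y * (y + 2 * m) * (y + degreeGain m i)) := by
      have := sub_nonneg.2 hd
      positivity
    rw [← sub_nonneg]
    convert hgap using 1
    field_simp
    ring
  calc _ ≤ outcomeMean m p ((y + 2 * m) / S) fun i =>
        (S + 2 * m) / y + -((S + 2 * m) / (y * (y + 2 * m))) * degreeGain m i :=
        outcomeMean_mono hp ⟨by positivity, (div_le_one hS).2 hyS⟩ hchord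
    _ = (S ^ 2 - (2 * m) ^ 2) / (S * y) -
        2 * m * (S + 2 * m) / (y * (y + 2 * m)) * polyP m p ((y + 2 * m) / S) := by
        rw [outcomeMean_add_mul, outcomeMean_degreeGain]
        field_simp
        ring
    _ ≤ S ^ 2 / (S * y) - 0 := by
        gcongr
        · exact sub_le_self _ (sq_nonneg _)
        · positivity
    _ = S / y := by
        field_simp
        ring

lemma outcomeProb_reflect {k : ℕ} (hk : k ≤ m) (b : Bool) :
    outcomeProb m (fun k => 1 - p (m - k)) (1 - z) (k, b) = outcomeProb m p z (m - k, !b) := by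
  simp only [outcomeProb, Nat.choose_symm hk, Nat.sub_sub_self hk, sub_sub_cancel]
  cases b <;> simp only [Bool.not_true, Bool.not_false, Bool.false_eq_true, if_true, if_false] <;>
    ring

lemma polyP_reflect (hm : m ≠ 0) :
    polyP m (fun k => 1 - p (m - k)) z = -polyP m p (1 - z) := by
  rw [polyP, polyP, ← mul_neg, ← Finset.sum_neg_distrib, ← Finset.sum_range_reflect]
  congr 1
  refine Finset.sum_congr rfl fun k hk => ?_
  have hk : k ≤ m := Nat.lt_succ_iff.1 (Finset.mem_range.1 hk)
  have hdiv : ((m - k : ℕ) : ℝ) / m = 1 - k / m := by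
    rw [Nat.cast_sub hk, sub_div, div_self (Nat.cast_ne_zero.2 hm)]
  rw [Nat.add_sub_cancel, Nat.choose_symm hk, Nat.sub_sub_self hk, sub_sub_cancel, hdiv]
  ring

end StepLaw

namespace PAProcess

variable {Ω : Type} [MeasurableSpace Ω] (P : PAProcess Ω)

instance : IsProbabilityMeasure P.μ := P.isProb

section Transition

lemma cast_S (n : ℕ) : (P.S n : ℝ) = P.X0 + P.Y0 + 2 * P.m * n := by
  simp [S]

lemma cast_S_succ (n : ℕ) : (P.S (n + 1) : ℝ) = P.S n + 2 * P.m := by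
  simp only [cast_S]
  push_cast
  ring

lemma S_mono : Monotone P.S := fun _ _ h => by
  unfold S
  gcongr

lemma S_pos (hS : 0 < P.S 0) (n : ℕ) : 0 < P.S n :=
  hS.trans_le (P.S_mono n.zero_le)

lemma two_mul_le_S_succ (n : ℕ) : (2 * P.m * (n + 1) : ℝ) ≤ P.S (n + 1) := by
  rw [cast_S, Nat.cast_succ]
  exact le_add_of_nonneg_left (by positivity)

lemma cast_m_pos : (0 : ℝ) < P.m := Nat.cast_pos.2 P.hm

lemma S_succ_pos (n : ℕ) : (0 : ℝ) < P.S (n + 1) :=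
  (mul_pos (mul_pos two_pos P.cast_m_pos) n.cast_add_one_pos).trans_le (P.two_mul_le_S_succ n)

lemma x_mem_Icc (n : ℕ) (ω : Ω) : P.x n ω ∈ Icc (0 : ℝ) 1 :=
  ⟨by unfold x; positivity, div_le_one_of_le₀ (mod_cast P.hXle n ω) (Nat.cast_nonneg _)⟩

lemma measurable_A (n : ℕ) : Measurable (P.A n) := (P.adaptedA n).mono (P.F.le n) le_rfl

lemma measurable_X (n : ℕ) : Measurable (P.X n) := (P.adaptedX n).mono (P.F.le n) le_rfl

lemma stronglyMeasurable_comp_X (n : ℕ) (f : ℕ → ℝ) :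
    StronglyMeasurable[P.F n] fun ω => f (P.X n ω) :=
  ((measurable_of_countable f).comp (P.adaptedX n)).stronglyMeasurable

lemma integrable_comp_X (n : ℕ) (f : ℕ → ℝ) : Integrable (fun ω => f (P.X n ω)) P.μ := by
  refine .of_bound ((P.stronglyMeasurable_comp_X n f).mono (P.F.le n)).aestronglyMeasurable
    (∑ j ∈ Finset.range (P.S n + 1), ‖f j‖) (.of_forall fun ω => ?_)
  exact Finset.single_le_sum (f := fun j => ‖f j‖) (fun j _ => norm_nonneg _)
    (Finset.mem_range_succ_iff.2 (P.hXle n ω))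

/-- The event that the step from time `n` to time `n + 1` has outcome `i`. -/
def jump (n : ℕ) (i : ℕ × Bool) : Set Ω :=
  {ω | P.A (n + 1) ω = P.A n ω + i.2.toNat ∧ P.X (n + 1) ω = P.X n ω + degreeGain P.m i}

lemma measurableSet_jump (n : ℕ) (i : ℕ × Bool) : MeasurableSet (P.jump n i) :=
  (measurableSet_eq_fun (P.measurable_A _) ((P.measurable_A n).add_const _)).inter
    (measurableSet_eq_fun (P.measurable_X _) ((P.measurable_X n).add_const _))

lemma pairwiseDisjoint_jump (n : ℕ) (s : Set (ℕ × Bool)) : s.PairwiseDisjoint (P.jump n) := by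
  rintro ⟨k, b⟩ - ⟨k', b'⟩ - hne
  refine Set.disjoint_left.2 fun ω ⟨hA, hX⟩ ⟨hA', hX'⟩ => hne ?_
  obtain rfl : b = b' := by
    have htoNat := Nat.add_left_cancel (hA.symm.trans hA')
    cases b <;> cases b' <;> simp_all
  simpa [degreeGain] using hX.symm.trans hX'

lemma condExp_jump (n : ℕ) {i : ℕ × Bool} (hi : i ∈ outcomes P.m) :
    P.μ[(P.jump n i).indicator (fun _ => (1 : ℝ)) | P.F n] =ᵐ[P.μ]
      fun ω => outcomeProb P.m P.p (P.x n ω) i := by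
  obtain ⟨k, _ | _⟩ := i
  · simpa [jump, degreeGain, outcomeProb, x, cast_S] using P.step_blue n k (mem_outcomes.1 hi)
  · simpa [jump, degreeGain, outcomeProb, x, cast_S, add_assoc] using
      P.step_red n k (mem_outcomes.1 hi)

lemma ae_exists_mem_jump : ∀ᵐ ω ∂P.μ, ∀ n, ∃ i ∈ outcomes P.m, ω ∈ P.jump n i := by
  refine ae_all_iff.2 fun n => ae_exists_mem_of_sum_condExp_indicator_eq_one (P.F.le n)
    (fun i _ => P.measurableSet_jump n i) (P.pairwiseDisjoint_jump n _) ?_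
  filter_upwards [(Finset.eventually_all _).2 fun i hi => P.condExp_jump n hi] with ω hω
  rw [Finset.sum_congr rfl hω, sum_outcomeProb, Pi.one_apply]

lemma condExp_ae_eq_outcomeMean (n : ℕ) {Y : Ω → ℝ} (g : ℕ × Bool → ℕ → ℝ)
    (hY : ∀ i ∈ outcomes P.m, ∀ ω ∈ P.jump n i, Y ω = g i (P.X n ω)) :
    P.μ[Y | P.F n] =ᵐ[P.μ]
      fun ω => outcomeMean P.m P.p (P.x n ω) fun i => g i (P.X n ω) := by
  filter_upwards [condExp_ae_eq_sum_of_eqOn (fun i _ => P.measurableSet_jump n i)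
      (P.pairwiseDisjoint_jump n _) (ae_all_iff.1 P.ae_exists_mem_jump n)
      (fun i _ => P.stronglyMeasurable_comp_X n (g i)) (fun i _ => P.integrable_comp_X n (g i)) hY,
    (Finset.eventually_all _).2 fun i hi => P.condExp_jump n hi] with ω hsum hprob
  rw [hsum]
  exact Finset.sum_congr rfl fun i hi => by rw [hprob i hi]

end Transition

section Growth

lemma tendsto_sum_div_S :
    Tendsto (fun n => ∑ i ∈ Finset.range n, (P.m : ℝ) / P.S (i + 1)) atTop atTop := by
  have hS1 := P.S_succ_pos 0
  have hbound (i : ℕ) : P.m / P.S 1 * (1 / (i + 1 : ℝ)) ≤ P.m / P.S (i + 1) := by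
    rw [div_mul_div_comm, mul_one]
    refine div_le_div_of_nonneg_left P.cast_m_pos.le (P.S_succ_pos i) ?_
    simp only [cast_S]
    push_cast
    nlinarith [show (0 : ℝ) ≤ (P.X0 + P.Y0) * i by positivity]
  refine tendsto_atTop_mono (fun n => ?_)
    (Real.tendsto_sum_range_one_div_nat_succ_atTop.const_mul_atTop (div_pos P.cast_m_pos hS1))
  rw [Finset.mul_sum]
  exact Finset.sum_le_sum fun i _ => hbound i

lemma ae_monotone_X : ∀ᵐ ω ∂P.μ, Monotone fun n => P.X n ω := by
  filter_upwards [P.ae_exists_mem_jump] with ω hω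
  refine monotone_nat_of_le_succ fun n => ?_
  obtain ⟨i, -, -, hX⟩ := hω n
  exact hX ▸ Nat.le_add_right _ _

lemma condExp_X_sub (n : ℕ) :
    P.μ[(fun ω => (P.X (n + 1) ω : ℝ)) - (fun ω => (P.X n ω : ℝ)) | P.F n] =ᵐ[P.μ]
      fun ω => 2 * P.m * (P.x n ω + P.poly (P.x n ω)) := by
  refine (P.condExp_ae_eq_outcomeMean n (fun i _ => degreeGain P.m i) fun i _ ω hω => ?_).trans
    (.of_forall fun ω => outcomeMean_degreeGain)
  simp [hω.2]

lemma mul_x_le_drift (n : ℕ) (ω : Ω) :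
    P.m * P.x n ω ≤ 2 * P.m * (P.x n ω + P.poly (P.x n ω)) := by
  rw [poly, ← outcomeMean_degreeGain, ← outcomeMean_fst (p := P.p)]
  exact outcomeMean_mono P.hp (P.x_mem_Icc n ω) fun i _ =>
    Nat.cast_le.2 (Nat.le_add_right _ _)

lemma ae_tendsto_X_atTop (hX0 : 0 < P.X0) :
    ∀ᵐ ω ∂P.μ, Tendsto (fun n => P.X n ω) atTop atTop := by
  have hiff := tendsto_sum_indicator_atTop_iff (μ := P.μ) (ℱ := P.F)
    (f := fun n ω => (P.X n ω : ℝ)) (R := 2 * P.m)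
    (by filter_upwards [P.ae_monotone_X] with ω hω n using Nat.cast_le.2 (hω n.le_succ))
    (fun n => P.stronglyMeasurable_comp_X n _) (fun n => P.integrable_comp_X n _)
    (by
      filter_upwards [P.ae_exists_mem_jump] with ω hω n
      obtain ⟨i, hi, -, hX⟩ := hω n
      simpa [hX] using mod_cast degreeGain_le hi)
  filter_upwards [hiff, P.ae_monotone_X, ae_all_iff.2 P.condExp_X_sub] with ω hω hmono hdrift
  have hx (n : ℕ) : (P.m : ℝ) / P.S (n + 1) ≤ P.m * P.x n ω := by
    have hS : 0 < P.S n := P.S_pos (by unfold S; lia) n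
    have hX : 1 ≤ P.X n ω := hX0.trans_le (P.hX0 ω ▸ hmono n.zero_le)
    rw [div_eq_mul_one_div, x]
    gcongr
    · exact mod_cast hX
    · exact P.S_mono n.le_succ
  refine tendsto_natCast_atTop_iff.1 (hω.2 (tendsto_atTop_mono (fun n => ?_) P.tendsto_sum_div_S))
  rw [predictablePart, Finset.sum_apply]
  exact Finset.sum_le_sum fun i _ =>
    ((hx i).trans (P.mul_x_le_drift i ω)).trans_eq (hdrift i).symm

end Growth

section InDegree

/-- The number of edge endpoints received by red nodes, up to the constant `X 0 - m * A 0`: each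
red node contributes `m` further endpoints to the red degree. -/
def redInDegree (n : ℕ) (ω : Ω) : ℝ := P.X n ω - P.m * P.A n ω

/-- The centred increment of the red in-degree, divided by the new total degree. -/
def noise (n : ℕ) (ω : Ω) : ℝ :=
  (P.redInDegree (n + 1) ω - P.redInDegree n ω - P.m * P.x n ω) / P.S (n + 1)

/-- The partial sums of `noise`, a martingale bounded in `L²`. -/
def noiseSum (n : ℕ) (ω : Ω) : ℝ := ∑ i ∈ Finset.range n, P.noise i ω

lemma noise_of_mem_jump {n : ℕ} {i : ℕ × Bool} {ω : Ω} (hω : ω ∈ P.jump n i) :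
    P.noise n ω = (i.1 - P.m * P.x n ω) / P.S (n + 1) := by
  rw [noise, redInDegree, redInDegree, hω.1, hω.2, degreeGain]
  push_cast
  ring

lemma ae_abs_noise_le : ∀ᵐ ω ∂P.μ, ∀ n : ℕ, |P.noise n ω| ≤ 1 / (n + 1) := by
  filter_upwards [P.ae_exists_mem_jump] with ω hω n
  obtain ⟨i, hi, hjump⟩ := hω n
  have hi : (i.1 : ℝ) ≤ P.m := mod_cast mem_outcomes.1 hi
  have hx := P.x_mem_Icc n ω
  have hm := P.cast_m_pos
  rw [P.noise_of_mem_jump hjump, abs_div, abs_of_pos (P.S_succ_pos n)]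
  calc |i.1 - P.m * P.x n ω| / P.S (n + 1) ≤ P.m / (2 * P.m * (n + 1)) := by
        gcongr
        · rw [abs_le]
          constructor <;> nlinarith [hx.1, hx.2, i.1.cast_nonneg (α := ℝ)]
        · exact P.two_mul_le_S_succ n
    _ = 1 / (n + 1) / 2 := by field_simp
    _ ≤ 1 / (n + 1) := half_le_self (by positivity)

lemma condExp_noise (n : ℕ) : P.μ[P.noise n | P.F n] =ᵐ[P.μ] 0 := by
  refine (P.condExp_ae_eq_outcomeMean n (fun i j => -(P.m * (j / P.S n)) / P.S (n + 1) +
    (P.S (n + 1) : ℝ)⁻¹ * i.1) fun i _ ω hω => ?_).trans (.of_forall fun ω => ?_)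
  · rw [P.noise_of_mem_jump hω, x]
    ring
  · dsimp only
    rw [outcomeMean_add_mul, outcomeMean_fst, x, Pi.zero_apply]
    ring

lemma stronglyAdapted_noiseSum : StronglyAdapted P.F P.noiseSum := by
  intro n
  refine Finset.stronglyMeasurable_fun_sum _ fun i hi => ?_
  have hX (j : ℕ) (hj : j ≤ n) : Measurable[P.F n] fun ω => (P.X j ω : ℝ) :=
    measurable_from_top.comp ((P.adaptedX j).mono (P.F.mono hj) le_rfl)
  have hA (j : ℕ) (hj : j ≤ n) : Measurable[P.F n] fun ω => (P.A j ω : ℝ) :=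
    measurable_from_top.comp ((P.adaptedA j).mono (P.F.mono hj) le_rfl)
  have hR (j : ℕ) (hj : j ≤ n) : Measurable[P.F n] (P.redInDegree j) :=
    (hX j hj).sub ((hA j hj).const_mul _)
  have hi : i + 1 ≤ n := Finset.mem_range.1 hi
  have hi' : i ≤ n := i.le_succ.trans hi
  exact ((((hR _ hi).sub (hR _ hi')).sub (((hX _ hi').div_const _).const_mul _)).div_const
    _).stronglyMeasurable

lemma noiseSum_succ_sub (n : ℕ) (ω : Ω) :
    P.noiseSum (n + 1) ω - P.noiseSum n ω = P.noise n ω := by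
  rw [noiseSum, noiseSum, Finset.sum_range_succ_sub_sum]

lemma memLp_noiseSum (n : ℕ) : MemLp (P.noiseSum n) 2 P.μ := by
  refine MemLp.of_bound ((P.stronglyAdapted_noiseSum n).mono (P.F.le n)).aestronglyMeasurable
    (∑ i ∈ Finset.range n, 1 / (i + 1 : ℝ)) ?_
  filter_upwards [P.ae_abs_noise_le] with ω hω
  exact (Finset.abs_sum_le_sum_abs _ _).trans (Finset.sum_le_sum fun i _ => hω i)

lemma martingale_noiseSum : Martingale P.noiseSum P.F P.μ := by
  refine martingale_of_condExp_sub_eq_zero_nat P.stronglyAdapted_noiseSum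
    (fun n => (P.memLp_noiseSum n).integrable one_le_two) fun n => ?_
  rw [show P.noiseSum (n + 1) - P.noiseSum n = P.noise n from funext (P.noiseSum_succ_sub n)]
  exact P.condExp_noise n

lemma ae_exists_tendsto_noiseSum :
    ∀ᵐ ω ∂P.μ, ∃ l, Tendsto (fun n => P.noiseSum n ω) atTop (𝓝 l) := by
  refine ae_exists_tendsto_of_martingale_of_summable P.martingale_noiseSum P.memLp_noiseSum
    (.of_nonneg_of_le (fun n => integral_nonneg fun ω => sq_nonneg _) (fun n => ?_)
      ((summable_nat_add_iff 1).2 (Real.summable_one_div_nat_pow.2 one_lt_two)))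
  calc ∫ ω, (P.noiseSum (n + 1) ω - P.noiseSum n ω) ^ 2 ∂P.μ
      ≤ ∫ _, (1 / ((n + 1 : ℕ) : ℝ) ^ 2) ∂P.μ := by
        refine integral_mono_of_nonneg (.of_forall fun ω => sq_nonneg _) (integrable_const _) ?_
        filter_upwards [P.ae_abs_noise_le] with ω hω
        rw [noiseSum_succ_sub, ← one_div_pow, Nat.cast_succ, ← sq_abs]
        gcongr
        exact hω n
    _ = _ := by simp

lemma tendsto_A_div_S_of_tendsto_a (hS : 0 < P.S 0) {ω : Ω}
    (ha : Tendsto (fun n => P.a n ω) atTop (𝓝 0)) :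
    Tendsto (fun n => (P.A n ω : ℝ) / P.S n) atTop (𝓝 0) := by
  have hle : ∀ᶠ n : ℕ in atTop, (P.A n ω : ℝ) / P.S n ≤ (P.A0 + P.B0 + 1) * P.a n ω := by
    filter_upwards [eventually_gt_atTop 0] with n hn
    have hS1 : n + 1 ≤ P.S n := by
      have hmn := Nat.mul_le_mul_right n P.hm
      unfold S at hS ⊢
      lia
    have hSn : (0 : ℝ) < P.S n := Nat.cast_pos.2 (P.S_pos hS n)
    have hratio : (P.A0 + P.B0 + n : ℝ) ≤ (P.A0 + P.B0 + 1) * P.S n := by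
      calc (P.A0 + P.B0 + n : ℝ) ≤ (P.A0 + P.B0 + 1) * (n + 1) := by
            nlinarith [show (0 : ℝ) ≤ (P.A0 + P.B0) * n by positivity]
        _ ≤ _ := by
            gcongr
            exact mod_cast hS1
    rw [a, mul_div_assoc', div_le_div_iff₀ hSn (by positivity), mul_comm _ (P.A n ω : ℝ), mul_assoc]
    gcongr
  refine squeeze_zero' (.of_forall fun n => by positivity) hle ?_
  simpa using ha.const_mul (P.A0 + P.B0 + 1 : ℝ)

lemma redInDegree_div_S_succ (hS : 0 < P.S 0) (n : ℕ) (ω : Ω) :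
    P.redInDegree (n + 1) ω / P.S (n + 1) - P.noiseSum (n + 1) ω =
      (1 - P.m / P.S (n + 1)) * (P.redInDegree n ω / P.S n - P.noiseSum n ω) +
        P.m / P.S (n + 1) * (P.m * (P.A n ω / P.S n) - P.noiseSum n ω) := by
  have hSn : (P.S n : ℝ) ≠ 0 := Nat.cast_ne_zero.2 (P.S_pos hS n).ne'
  have hSn1 := (P.S_succ_pos n).ne'
  rw [← add_sub_cancel (P.noiseSum n ω) (P.noiseSum (n + 1) ω), noiseSum_succ_sub, noise, x]
  have hX : (P.X n ω : ℝ) = P.redInDegree n ω + P.m * P.A n ω := by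
    rw [redInDegree, sub_add_cancel]
  have hm : (P.S (n + 1) : ℝ) = P.S n + 2 * P.m := P.cast_S_succ n
  rw [hX]
  field_simp
  rw [hm]
  ring

lemma ae_tendsto_x_of_tendsto_a (hS : 0 < P.S 0) : ∀ᵐ ω ∂P.μ,
    Tendsto (fun n => P.a n ω) atTop (𝓝 0) → Tendsto (fun n => P.x n ω) atTop (𝓝 0) := by
  filter_upwards [P.ae_exists_tendsto_noiseSum] with ω ⟨l, hl⟩ ha
  have hA : Tendsto (fun n => P.m * ((P.A n ω : ℝ) / P.S n)) atTop (𝓝 0) := by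
    simpa using (P.tendsto_A_div_S_of_tendsto_a hS ha).const_mul (P.m : ℝ)
  have hdiff : Tendsto (fun n => P.redInDegree n ω / P.S n - P.noiseSum n ω) atTop (𝓝 (0 - l)) := by
    refine tendsto_of_convexComb_recursion (c := fun n => P.m / P.S (n + 1))
      (fun n => by positivity) (fun n => ?_) P.tendsto_sum_div_S (hA.sub hl)
      (P.redInDegree_div_S_succ hS · ω)
    refine div_le_one_of_le₀ ?_ (Nat.cast_nonneg _)
    have := P.two_mul_le_S_succ n
    nlinarith [P.cast_m_pos, n.cast_nonneg (α := ℝ)]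
  have hx := (hdiff.add hl).add hA
  rw [sub_add_cancel, add_zero] at hx
  refine hx.congr fun n => ?_
  rw [redInDegree, x]
  ring

end InDegree

section Lyapunov

variable {ε : ℝ} {N n : ℕ} {ω : Ω}

/-- The Lyapunov function: the total degree at time `n` over the red degree `j` shifted by `2 * m`.
The subtraction is truncated, so the values are meaningful only for `2 * m < j`. -/
def potential (n j : ℕ) : ℝ := P.S n / (j - 2 * P.m : ℕ)

/-- The event that at time `n` the potential is meaningful and `x n` lies below the threshold
`ε`. -/
def good (ε : ℝ) (n : ℕ) : Set Ω := {ω | 2 * P.m < P.X n ω ∧ P.x n ω < ε}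

/-- The event that `good ε` holds at all times from `N` up to `n - 1`. -/
def goodSince (ε : ℝ) (N n : ℕ) : Set Ω := ⋂ i ∈ Finset.Ico N n, P.good ε i

/-- The potential of the process, killed at the first time after `N` that is not `good`. -/
def killedPotential (ε : ℝ) (N n : ℕ) : Ω → ℝ :=
  (P.goodSince ε N n).indicator fun ω => P.potential n (P.X n ω)

lemma potential_nonneg (n j : ℕ) : 0 ≤ P.potential n j := by
  unfold potential
  positivity

lemma goodSince_succ (hN : N ≤ n) :
    P.goodSince ε N (n + 1) = P.good ε n ∩ P.goodSince ε N n := by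
  rw [goodSince, ← Finset.insert_Ico_right_eq_Ico_add_one hN, Finset.set_biInter_insert, goodSince]

lemma measurableSet_goodSince (ε : ℝ) (N : ℕ) {k : ℕ} (hk : k ≤ n + 1) :
    MeasurableSet[P.F n] (P.goodSince ε N k) := by
  refine Finset.measurableSet_biInter _ fun i hi => P.F.mono (i := i) ?_ _ ?_
  · have := (Finset.mem_Ico.1 hi).2
    lia
  · exact P.adaptedX i
      (MeasurableSet.of_discrete (s := {j | 2 * P.m < j ∧ (j : ℝ) / P.S i < ε}))

lemma integrable_killedPotential (ε : ℝ) (N n : ℕ) :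
    Integrable (P.killedPotential ε N n) P.μ :=
  (P.integrable_comp_X n (P.potential n)).indicator
    (P.F.le n _ (P.measurableSet_goodSince ε N n.le_succ))

lemma measurable_killedPotential (ε : ℝ) (N n : ℕ) : Measurable (P.killedPotential ε N n) :=
  ((P.stronglyMeasurable_comp_X n (P.potential n)).mono (P.F.le n)).measurable.indicator
    (P.F.le n _ (P.measurableSet_goodSince ε N n.le_succ))

lemma killedPotential_nonneg (ε : ℝ) (N n : ℕ) (ω : Ω) : 0 ≤ P.killedPotential ε N n ω :=
  indicator_nonneg (fun _ _ => P.potential_nonneg _ _) ω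

lemma outcomeMean_potential_le (hP : ∀ y ∈ Ioo (0 : ℝ) ε, 0 ≤ P.poly y) (hω : ω ∈ P.good ε n) :
    outcomeMean P.m P.p (P.x n ω)
      (fun i => P.potential (n + 1) (P.X n ω + degreeGain P.m i)) ≤ P.potential n (P.X n ω) := by
  obtain ⟨y, hy⟩ := Nat.exists_eq_add_of_lt hω.1
  have hX : P.X n ω = y + 1 + 2 * P.m := by lia
  have hXS : ((y + 1 : ℕ) : ℝ) + 2 * P.m ≤ P.S n := mod_cast hX ▸ P.hXle n ω
  have hx : P.x n ω = ((y + 1 : ℕ) + 2 * P.m) / P.S n := by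
    rw [x, hX]
    push_cast
    rfl
  have hx0 : 0 < P.x n ω := by
    rw [hx]
    have : (0 : ℝ) < P.S n := lt_of_lt_of_le (by positivity) hXS
    positivity
  have hpoly := hP _ ⟨hx0, hω.2⟩
  rw [hx] at hpoly ⊢
  simpa [potential, hX, cast_S_succ, add_right_comm _ (2 * P.m)] using
    outcomeMean_total_div_le P.hp (by positivity) hXS hpoly

lemma condExp_killedPotential_succ_le (hP : ∀ y ∈ Ioo (0 : ℝ) ε, 0 ≤ P.poly y) (hN : N ≤ n) :
    P.μ[P.killedPotential ε N (n + 1) | P.F n] ≤ᵐ[P.μ] P.killedPotential ε N n := by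
  filter_upwards [condExp_indicator (P.integrable_comp_X (n + 1) (P.potential (n + 1)))
      (P.measurableSet_goodSince ε N le_rfl),
    P.condExp_ae_eq_outcomeMean n (fun i j => P.potential (n + 1) (j + degreeGain P.m i))
      fun i _ ω hω => congrArg _ hω.2] with ω hind hmean
  rw [killedPotential, hind]
  by_cases hω : ω ∈ P.goodSince ε N (n + 1)
  · obtain ⟨hgood, hsince⟩ : ω ∈ P.good ε n ∩ P.goodSince ε N n := P.goodSince_succ hN ▸ hω
    rw [indicator_of_mem hω, hmean, killedPotential, indicator_of_mem hsince]
    exact P.outcomeMean_potential_le hP hgood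
  · rw [indicator_of_notMem hω]
    exact P.killedPotential_nonneg ε N n ω

lemma integral_killedPotential_le (hP : ∀ y ∈ Ioo (0 : ℝ) ε, 0 ≤ P.poly y) (hN : N ≤ n) :
    ∫ ω, P.killedPotential ε N n ω ∂P.μ ≤ ∫ ω, P.killedPotential ε N N ω ∂P.μ := by
  induction n, hN using Nat.le_induction with
  | base => rfl
  | succ n hN ih =>
    refine le_trans ?_ ih
    rw [← integral_condExp (P.F.le n)]
    exact integral_mono_ae integrable_condExp (P.integrable_killedPotential ε N n)
      (P.condExp_killedPotential_succ_le hP hN)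

lemma ae_not_tendsto_killedPotential (hP : ∀ y ∈ Ioo (0 : ℝ) ε, 0 ≤ P.poly y) (N : ℕ) :
    ∀ᵐ ω ∂P.μ, ¬ Tendsto (fun n => P.killedPotential ε N (n + N) ω) atTop atTop := by
  refine ae_not_tendsto_atTop_of_eLpNorm_bdd (p := 1) one_ne_zero
    (R := (∫ ω, P.killedPotential ε N N ω ∂P.μ).toNNReal)
    (fun n => P.measurable_killedPotential ε N (n + N)) fun n => ?_
  rw [eLpNorm_one_eq_lintegral_enorm,
    ← ofReal_integral_norm_eq_lintegral_enorm (P.integrable_killedPotential ε N (n + N))]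
  refine ENNReal.ofReal_le_ofReal ?_
  simp only [Real.norm_of_nonneg (P.killedPotential_nonneg _ _ _ _)]
  exact P.integral_killedPotential_le hP (Nat.le_add_left N n)

lemma tendsto_killedPotential (hgood : ∀ n ≥ N, ω ∈ P.good ε n)
    (hx : Tendsto (fun n => P.x n ω) atTop (𝓝 0)) :
    Tendsto (fun n => P.killedPotential ε N (n + N) ω) atTop atTop := by
  have hpos (n : ℕ) (hn : N ≤ n) : 0 < P.x n ω := by
    have hX : 0 < P.X n ω := (Nat.zero_le _).trans_lt (hgood n hn).1
    have hS : 0 < P.S n := hX.trans_le (P.hXle n ω)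
    unfold x
    positivity
  have hinv : Tendsto (fun n => (P.x n ω)⁻¹) atTop atTop :=
    tendsto_inv_nhdsGT_zero.comp (tendsto_nhdsWithin_iff.2
      ⟨hx, (eventually_ge_atTop N).mono hpos⟩)
  refine tendsto_atTop_mono (fun n => ?_) (hinv.comp (tendsto_add_atTop_nat N))
  have hmem : ω ∈ P.goodSince ε N (n + N) :=
    mem_iInter₂.2 fun i hi => hgood i (Finset.mem_Ico.1 hi).1
  rw [killedPotential, indicator_of_mem hmem, potential, Function.comp_apply, x, inv_div]
  gcongr
  · exact Nat.cast_pos.2 <| Nat.sub_pos_of_lt (hgood _ (Nat.le_add_left N n)).1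
  · exact Nat.sub_le _ _

lemma ae_not_tendsto_x (hX0 : 0 < P.X0) (hε : 0 < ε) (hP : ∀ y ∈ Ioo (0 : ℝ) ε, 0 ≤ P.poly y) :
    ∀ᵐ ω ∂P.μ, ¬ Tendsto (fun n => P.x n ω) atTop (𝓝 0) := by
  filter_upwards [P.ae_tendsto_X_atTop hX0, ae_all_iff.2 (P.ae_not_tendsto_killedPotential hP)]
    with ω hX hkilled hx
  obtain ⟨N, hN⟩ := eventually_atTop.1
    ((hX.eventually_gt_atTop (2 * P.m)).and (hx.eventually_lt_const hε))
  exact hkilled N (P.tendsto_killedPotential hN hx)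

lemma measure_tendsto_a_zero (hX0 : 0 < P.X0) (hε : 0 < ε)
    (hP : ∀ y ∈ Ioo (0 : ℝ) ε, 0 ≤ P.poly y) :
    P.μ {ω | Tendsto (fun n => P.a n ω) atTop (𝓝 0)} = 0 := by
  have hS : 0 < P.S 0 := by
    unfold S
    lia
  have hae : ∀ᵐ ω ∂P.μ, ¬ Tendsto (fun n => P.a n ω) atTop (𝓝 0) := by
    filter_upwards [P.ae_tendsto_x_of_tendsto_a hS, P.ae_not_tendsto_x hX0 hε hP] with ω ha hx
      using mt ha hx
  simpa [ae_iff] using hae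

end Lyapunov

section Reflection

/-- The number of blue nodes. The truncated subtraction is exact almost surely, by `ae_A_le`. -/
def blueCount (n : ℕ) (ω : Ω) : ℕ := P.A0 + P.B0 + n - P.A n ω

/-- The sum of the degrees of blue nodes. The truncated subtraction is exact. -/
def blueDegree (n : ℕ) (ω : Ω) : ℕ := P.S n - P.X n ω

lemma ae_A_le : ∀ᵐ ω ∂P.μ, ∀ n, P.A n ω ≤ P.A0 + P.B0 + n := by
  filter_upwards [P.ae_exists_mem_jump] with ω hω n
  induction n with
  | zero =>
    rw [P.hA0]
    lia
  | succ n ih =>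
    obtain ⟨i, -, hA, -⟩ := hω n
    have := i.2.toNat_le
    lia

lemma blueDegree_div_S (hS : 0 < P.S 0) (n : ℕ) (ω : Ω) :
    (P.blueDegree n ω : ℝ) / P.S n = 1 - P.x n ω := by
  have hXS : P.X n ω ≤ P.S n := P.hXle n ω
  rw [blueDegree, x, Nat.cast_sub hXS, sub_div, div_self (Nat.cast_ne_zero.2 (P.S_pos hS n).ne')]

lemma mem_jump_reflect_iff {n k : ℕ} {b : Bool} {ω : Ω} (hA : ∀ n, P.A n ω ≤ P.A0 + P.B0 + n)
    (hk : k ≤ P.m) :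
    (P.blueCount (n + 1) ω = P.blueCount n ω + b.toNat ∧
      P.blueDegree (n + 1) ω = P.blueDegree n ω + degreeGain P.m (k, b)) ↔
      ω ∈ P.jump n (P.m - k, !b) := by
  have hAn := hA n
  have hAn1 := hA (n + 1)
  have hX : P.X n ω ≤ P.S n := P.hXle n ω
  have hX1 : P.X (n + 1) ω ≤ P.S (n + 1) := P.hXle (n + 1) ω
  have hS : P.S (n + 1) = P.S n + 2 * P.m := mod_cast P.cast_S_succ n
  change _ ↔ P.A (n + 1) ω = _ ∧ P.X (n + 1) ω = _
  cases b <;> simp only [blueCount, blueDegree, degreeGain, Bool.toNat_true, Bool.toNat_false,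
    Bool.not_true, Bool.not_false, mul_one, mul_zero] <;> lia

lemma condExp_jump_reflect (hS : 0 < P.S 0) (n : ℕ) {k : ℕ} (hk : k ≤ P.m) (b : Bool) :
    P.μ[{ω | P.blueCount (n + 1) ω = P.blueCount n ω + b.toNat ∧
        P.blueDegree (n + 1) ω = P.blueDegree n ω + degreeGain P.m (k, b)}.indicator
          (fun _ => (1 : ℝ)) | P.F n] =ᵐ[P.μ]
      fun ω => outcomeProb P.m (fun k => 1 - P.p (P.m - k)) (P.blueDegree n ω / P.S n) (k, b) := by
  simp only [P.blueDegree_div_S hS, outcomeProb_reflect hk]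
  refine (condExp_congr_ae (indicator_ae_eq_of_ae_eq_set ?_)).trans
    (P.condExp_jump n (mem_outcomes.2 (Nat.sub_le _ _)))
  filter_upwards [P.ae_A_le] with ω hA
  exact propext (P.mem_jump_reflect_iff hA hk)

/-- The process with the two colours exchanged; `0 < P.S 0` makes `1 - P.x 0` the normalized blue
degree at time `0`. -/
def reflect (hS : 0 < P.S 0) : PAProcess Ω where
  μ := P.μ
  isProb := P.isProb
  m := P.m
  hm := P.hm
  p k := 1 - P.p (P.m - k)
  hp k _ := by
    obtain ⟨hp0, hp1⟩ := P.hp (P.m - k) (Nat.sub_le _ _)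
    exact ⟨sub_nonneg.2 hp1, sub_le_self _ hp0⟩
  A := P.blueCount
  X := P.blueDegree
  F := P.F
  A0 := P.B0
  B0 := P.A0
  X0 := P.Y0
  Y0 := P.X0
  hA0 ω := by simp [blueCount, P.hA0]
  hX0 ω := by simp [blueDegree, S, P.hX0]
  adaptedA n := (measurable_of_countable (P.A0 + P.B0 + n - ·)).comp (P.adaptedA n)
  adaptedX n := (measurable_of_countable (P.S n - ·)).comp (P.adaptedX n)
  hXle n ω := by
    rw [add_comm P.Y0]
    exact Nat.sub_le _ _
  step_red n k hk := by
    simpa [degreeGain, outcomeProb, cast_S, add_comm (P.X0 : ℝ), add_assoc] using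
      P.condExp_jump_reflect hS n hk true
  step_blue n k hk := by
    simpa [degreeGain, outcomeProb, cast_S, add_comm (P.X0 : ℝ)] using
      P.condExp_jump_reflect hS n hk false

lemma poly_reflect (hS : 0 < P.S 0) (y : ℝ) : (P.reflect hS).poly y = -P.poly (1 - y) :=
  polyP_reflect (Nat.one_le_iff_ne_zero.1 P.hm)

lemma ae_tendsto_a_reflect (hS : 0 < P.S 0) : ∀ᵐ ω ∂P.μ,
    Tendsto (fun n => P.a n ω) atTop (𝓝 1) →
      Tendsto (fun n => (P.reflect hS).a n ω) atTop (𝓝 0) := by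
  filter_upwards [P.ae_A_le] with ω hA ha
  have hsub : Tendsto (fun n => 1 - P.a n ω) atTop (𝓝 0) := by simpa using ha.const_sub 1
  refine hsub.congr' ?_
  filter_upwards [eventually_gt_atTop 0] with n hn
  have hden : (P.A0 + P.B0 + n : ℝ) ≠ 0 := by positivity
  change _ = ((P.A0 + P.B0 + n - P.A n ω : ℕ) : ℝ) / (P.B0 + P.A0 + n)
  rw [a, Nat.cast_sub (hA n), add_comm (P.B0 : ℝ)]
  push_cast
  rw [sub_div, div_self hden]

lemma measure_tendsto_a_one (hY0 : 0 < P.Y0) {ε : ℝ} (hε : 0 < ε)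
    (hP : ∀ y ∈ Ioo (1 - ε) (1 : ℝ), P.poly y ≤ 0) :
    P.μ {ω | Tendsto (fun n => P.a n ω) atTop (𝓝 1)} = 0 := by
  have hS : 0 < P.S 0 := by
    unfold S
    lia
  have hreflect := (P.reflect hS).measure_tendsto_a_zero hY0 hε fun y hy => by
    rw [poly_reflect, neg_nonneg]
    exact hP _ ⟨by linarith [hy.2], by linarith [hy.1]⟩
  exact measure_mono_null_ae (P.ae_tendsto_a_reflect hS) hreflect

end Reflection

end PAProcess

theorem nonlinear_model_unstable_endpoints_general {Ω : Type} [MeasurableSpace Ω]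
    (P : PAProcess Ω) :
    (0 < P.X0 → (∃ ε > (0 : ℝ), ∀ y ∈ Ioo (0 : ℝ) ε, 0 ≤ P.poly y) →
      P.μ {ω | Tendsto (fun n => P.a n ω) atTop (𝓝 0)} = 0) ∧
    (0 < P.Y0 → (∃ ε > (0 : ℝ), ∀ y ∈ Ioo (1 - ε) (1 : ℝ), P.poly y ≤ 0) →
      P.μ {ω | Tendsto (fun n => P.a n ω) atTop (𝓝 1)} = 0) :=
  ⟨fun hX0 ⟨_, hε, hP⟩ => P.measure_tendsto_a_zero hX0 hε hP,
    fun hY0 ⟨_, hε, hP⟩ => P.measure_tendsto_a_one hY0 hε hP⟩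

/-- **Nonlinear models, unstable endpoints.** In a nonlinear model with `X_0, Y_0 > 0`: if
`0 ∈ Z_P` and `P > 0` on `(0, ε)` for some `ε > 0`, then the probability that `a_n → 0` is
zero; and if `1 ∈ Z_P` and `P < 0` on `(1−ε, 1)` for some `ε > 0`, then the probability that
`a_n → 1` is zero. -/
theorem nonlinear_model_unstable_endpoints
    {Ω : Type} [MeasurableSpace Ω] (P : PAProcess Ω)
    (hnonlin : ∃ k ≤ P.m, P.p k ≠ (k : ℝ) / P.m)
    (hX0 : 0 < P.X0) (hY0 : 0 < P.Y0) :
    (((0 : ℝ) ∈ P.Zp ∧ ∃ ε > (0 : ℝ), ∀ y ∈ Set.Ioo (0 : ℝ) ε, 0 < P.poly y) →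
      P.μ {ω | Tendsto (fun n => P.a n ω) atTop (nhds (0 : ℝ))} = 0) ∧
    (((1 : ℝ) ∈ P.Zp ∧ ∃ ε > (0 : ℝ), ∀ y ∈ Set.Ioo (1 - ε) (1 : ℝ), P.poly y < 0) →
      P.μ {ω | Tendsto (fun n => P.a n ω) atTop (nhds (1 : ℝ))} = 0) := by
  obtain ⟨hzero, hone⟩ := nonlinear_model_unstable_endpoints_general P
  exact ⟨fun ⟨_, ε, hε, hP⟩ => hzero hX0 ⟨ε, hε, fun y hy => (hP y hy).le⟩,
    fun ⟨_, ε, hε, hP⟩ => hone hY0 ⟨ε, hε, fun y hy => (hP y hy).le⟩⟩
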